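/- Let 𝚫 ∈ 𝒜 and let m be the number of 3-cycles in Δ (counted up to cyclic permutation). Then f_𝚫 = m·[0,3] + [|Δ₀| + 1 − m, |Δ₀| − 1 − 2m]. -/

import Mathlib

/-! Common formalization infrastructure for gentle quivers (Bobinski–Buan,
    "Derived equivalence classification of gentle cluster tilted algebras"). -/

/-- A (finite) quiver with (length-two, monomial) relations.  Vertices and
arrows are natural numbers; `V` and `A` are the finite sets of vertices and
arrows, `src`/`tgt` give the start and terminus of each arrow, and `rel` is the
set of relations, a relation `(a, b)` standing for the length-two path
`a·b` (so `src a = tgt b`). -/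
structure QuivRel where
  V : Finset ℕ
  A : Finset ℕ
  src : ℕ → ℕ
  tgt : ℕ → ℕ
  rel : Finset (ℕ × ℕ)

namespace GentleQuiv

/-- Two vertices are adjacent if some arrow joins them (in either direction). -/
def Adj (Q : QuivRel) (x y : ℕ) : Prop :=
  ∃ a ∈ Q.A, (Q.src a = x ∧ Q.tgt a = y) ∨ (Q.src a = y ∧ Q.tgt a = x)

/-- A quiver is connected if any two of its vertices are joined by a walk. -/
def Connected (Q : QuivRel) : Prop :=
  ∀ x ∈ Q.V, ∀ y ∈ Q.V, Relation.ReflTransGen (Adj Q) x y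

/-- `l = [α₁, …, αₙ]` is a (nonempty) path in the quiver: consecutive arrows
compose, i.e. `s αᵢ = t αᵢ₊₁`. -/
def IsPathList (Q : QuivRel) (l : List ℕ) : Prop :=
  l ≠ [] ∧ (∀ a ∈ l, a ∈ Q.A) ∧ l.Chain' (fun a b => Q.src a = Q.tgt b)

/-- The path `l` contains a subpath (two consecutive arrows) lying in `R`. -/
def HasRelSubpath (Q : QuivRel) (l : List ℕ) : Prop :=
  ∃ a b, (a, b) ∈ Q.rel ∧ [a, b] <:+: l

/-- Gentle quiver: connected, relations are composable pairs of arrows, at most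
two arrows in/out of every vertex, the usual gentleness conditions on
relations, and a global bound forcing finite dimensionality. -/
def IsGentle (Q : QuivRel) : Prop :=
  Q.V.Nonempty ∧
  (∀ a ∈ Q.A, Q.src a ∈ Q.V ∧ Q.tgt a ∈ Q.V) ∧
  Connected Q ∧
  (∀ ρ ∈ Q.rel, ρ.1 ∈ Q.A ∧ ρ.2 ∈ Q.A ∧ Q.src ρ.1 = Q.tgt ρ.2) ∧
  (∀ x, (Q.A.filter fun a => Q.src a = x).card ≤ 2) ∧
  (∀ x, (Q.A.filter fun a => Q.tgt a = x).card ≤ 2) ∧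
  (∀ a ∈ Q.A, (Q.A.filter fun b => Q.src b = Q.tgt a ∧ (b, a) ∉ Q.rel).card ≤ 1) ∧
  (∀ a ∈ Q.A, (Q.A.filter fun c => Q.tgt c = Q.src a ∧ (a, c) ∉ Q.rel).card ≤ 1) ∧
  (∀ a ∈ Q.A, (Q.A.filter fun b => (b, a) ∈ Q.rel).card ≤ 1) ∧
  (∀ a ∈ Q.A, (Q.A.filter fun c => (a, c) ∈ Q.rel).card ≤ 1) ∧
  (∃ n : ℕ, ∀ l : List ℕ, IsPathList Q l → l.length = n → HasRelSubpath Q l)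

/-- A choice of functions `σ, τ : Δ₁ → {±1}` as in Avella-Alaminos–Geiss. -/
structure SigmaTau (Q : QuivRel) where
  σ : ℕ → ℤ
  τ : ℕ → ℤ
  σ_pm : ∀ a ∈ Q.A, σ a = 1 ∨ σ a = -1
  τ_pm : ∀ a ∈ Q.A, τ a = 1 ∨ τ a = -1
  σ_src : ∀ a ∈ Q.A, ∀ b ∈ Q.A, a ≠ b → Q.src a = Q.src b → σ a = -σ b
  τ_tgt : ∀ a ∈ Q.A, ∀ b ∈ Q.A, a ≠ b → Q.tgt a = Q.tgt b → τ a = -τ b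
  rel_iff : ∀ a ∈ Q.A, ∀ b ∈ Q.A, Q.src a = Q.tgt b → ((a, b) ∈ Q.rel ↔ σ a = τ b)

/-- A thread: either a trivial path/antipath `1_{x,ε}` at a vertex `x` with a
sign `ε`, or a sequence of arrows of positive length. -/
inductive Thread where
  | triv (x : ℕ) (ε : ℤ) : Thread
  | arrows (l : List ℕ) : Thread
deriving DecidableEq

/-- Source of a thread. -/
def Thread.source (Q : QuivRel) : Thread → ℕ
  | .triv x _ => x
  | .arrows l => Q.src l.getLast!

/-- Target of a thread. -/
def Thread.target (Q : QuivRel) : Thread → ℕ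
  | .triv x _ => x
  | .arrows l => Q.tgt l.head!

/-- `σω` (for paths and antipaths alike; `σ 1_{x,ε} = ε = σ 1'_{x,ε}`). -/
def Thread.sigma {Q : QuivRel} (st : SigmaTau Q) : Thread → ℤ
  | .triv _ ε => ε
  | .arrows l => st.σ l.getLast!

/-- `τω` when `ω` is regarded as a path (`τ 1_{x,ε} = -ε`). -/
def Thread.tauPath {Q : QuivRel} (st : SigmaTau Q) : Thread → ℤ
  | .triv _ ε => -ε
  | .arrows l => st.τ l.head!

/-- `τω` when `ω` is regarded as an antipath (`τ 1'_{x,ε} = ε`). -/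
def Thread.tauAnti {Q : QuivRel} (st : SigmaTau Q) : Thread → ℤ
  | .triv _ ε => ε
  | .arrows l => st.τ l.head!

/-- Length of a thread. -/
def Thread.len : Thread → ℕ
  | .triv _ _ => 0
  | .arrows l => l.length

/-- A path in `𝚫` of positive length (no two consecutive arrows in `R`). -/
def IsPermList (Q : QuivRel) (l : List ℕ) : Prop :=
  IsPathList Q l ∧ l.Chain' (fun a b => (a, b) ∉ Q.rel)

/-- An antipath in `𝚫` of positive length (all consecutive pairs in `R`). -/
def IsAntiList (Q : QuivRel) (l : List ℕ) : Prop :=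
  l ≠ [] ∧ (∀ a ∈ l, a ∈ Q.A) ∧ l.Chain' (fun a b => (a, b) ∈ Q.rel)

/-- A thread is a path in `𝚫` (including trivial ones). -/
def IsPathThread (Q : QuivRel) : Thread → Prop
  | .triv x ε => x ∈ Q.V ∧ (ε = 1 ∨ ε = -1)
  | .arrows l => IsPermList Q l

/-- A thread is an antipath in `𝚫` (including trivial ones). -/
def IsAntiThread (Q : QuivRel) : Thread → Prop
  | .triv x ε => x ∈ Q.V ∧ (ε = 1 ∨ ε = -1)
  | .arrows l => IsAntiList Q l

/-- `w ∈ ℳ`: `w` is a maximal path of `𝚫`. -/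
def InM (Q : QuivRel) (st : SigmaTau Q) (w : Thread) : Prop :=
  IsPathThread Q w ∧
  (¬ ∃ a ∈ Q.A, Q.src a = w.target Q ∧ st.σ a = -(w.tauPath st)) ∧
  (¬ ∃ b ∈ Q.A, Q.tgt b = w.source Q ∧ st.τ b = -(w.sigma st))

/-- `w ∈ 𝒩`: `w` is a maximal antipath of `𝚫`. -/
def InN (Q : QuivRel) (st : SigmaTau Q) (w : Thread) : Prop :=
  IsAntiThread Q w ∧
  (¬ ∃ a ∈ Q.A, Q.src a = w.target Q ∧ st.σ a = w.tauAnti st) ∧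
  (¬ ∃ b ∈ Q.A, Q.tgt b = w.source Q ∧ st.τ b = w.sigma st)

/-- The graph of the bijection `Φ = φ ∘ ψ : 𝒩 → 𝒩`:  `PhiRel Q st w w'` holds
iff `w, w' ∈ 𝒩` and the maximal path `ψ w` (with `s(ψw) = sw`, `σ(ψw) = -σw`)
satisfies `t w' = t (ψ w)` and `τ w' = -τ(ψ w)`, i.e. `w' = φ (ψ w) = Φ w`. -/
def PhiRel (Q : QuivRel) (st : SigmaTau Q) (w w' : Thread) : Prop :=
  InN Q st w ∧ InN Q st w' ∧
  ∃ m : Thread, InM Q st m ∧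
    m.source Q = w.source Q ∧ m.sigma st = -(w.sigma st) ∧
    w'.target Q = m.target Q ∧ w'.tauAnti st = -(m.tauPath st)

/-- `O` is an orbit of the `ℤ`-action on `𝒩` induced by `Φ`. -/
def NOrbit (Q : QuivRel) (st : SigmaTau Q) (O : Set Thread) : Prop :=
  ∃ w, InN Q st w ∧ O = {w' | Relation.EqvGen (PhiRel Q st) w w'}

/-- `p(𝒪) = |𝒪|` for an orbit `𝒪 ∈ 𝒩/ℤ`. -/
noncomputable def pN (O : Set Thread) : ℕ := O.ncard

/-- `q(𝒪) = Σ_{ω ∈ 𝒪} ℓ(ω)` for an orbit `𝒪 ∈ 𝒩/ℤ`. -/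
noncomputable def qN (O : Set Thread) : ℕ := ∑ᶠ w ∈ O, Thread.len w

/-- `a ∈ 𝒞`: the arrow `a` occurs in no maximal antipath. -/
def InC (Q : QuivRel) (st : SigmaTau Q) (a : ℕ) : Prop :=
  a ∈ Q.A ∧ ¬ ∃ l : List ℕ, InN Q st (.arrows l) ∧ a ∈ l

/-- The graph of the bijection `Ψ : 𝒞 → 𝒞`. -/
def PsiRel (Q : QuivRel) (st : SigmaTau Q) (a b : ℕ) : Prop :=
  InC Q st a ∧ InC Q st b ∧ Q.tgt b = Q.src a ∧ st.τ b = st.σ a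

/-- `O` is an orbit of the `ℤ`-action on `𝒞` induced by `Ψ`. -/
def COrbit (Q : QuivRel) (st : SigmaTau Q) (O : Set ℕ) : Prop :=
  ∃ a, InC Q st a ∧ O = {b | Relation.EqvGen (PsiRel Q st) a b}

/-- The Avella-Alaminos–Geiss invariant `f_𝚫 : ℕ² → ℕ`:  `f_𝚫 (p,q)` counts the
orbits `𝒪 ∈ 𝒩/ℤ ⊔ 𝒞/ℤ` with `p(𝒪) = p` and `q(𝒪) = q`. -/
noncomputable def fInv (Q : QuivRel) (st : SigmaTau Q) : ℕ × ℕ → ℕ := fun pq =>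
  {O : Set Thread | NOrbit Q st O ∧ pN O = pq.1 ∧ qN O = pq.2}.ncard +
  {O : Set ℕ | COrbit Q st O ∧ pq.1 = 0 ∧ O.ncard = pq.2}.ncard

/-- `[p, q] : ℕ² → ℕ`, the characteristic function of `{(p, q)}`. -/
def charFn (p q : ℕ) : ℕ × ℕ → ℕ := fun pq => if pq = (p, q) then 1 else 0

/-- Tree type: `|Δ₀| = |Δ₁| + 1`. -/
def TreeType (Q : QuivRel) : Prop := Q.V.card = Q.A.card + 1

/-- Removing a set of arrows (keeping all vertices); relations containing a
removed arrow are discarded. -/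
def deleteArrows (Q : QuivRel) (S : Finset ℕ) : QuivRel where
  V := Q.V
  A := Q.A \ S
  src := Q.src
  tgt := Q.tgt
  rel := Q.rel.filter fun ρ => ρ.1 ∉ S ∧ ρ.2 ∉ S

/-- Branch arrow: removing it disconnects the quiver. -/
def BranchArrow (Q : QuivRel) (a : ℕ) : Prop :=
  a ∈ Q.A ∧ ¬ Connected (deleteArrows Q {a})

/-- Cycle arrow: removing it leaves the quiver connected. -/
def CycleArrow (Q : QuivRel) (a : ℕ) : Prop :=
  a ∈ Q.A ∧ Connected (deleteArrows Q {a})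

/-- Branch relation: a relation one of whose arrows is a branch arrow. -/
def BranchRel (Q : QuivRel) (ρ : ℕ × ℕ) : Prop :=
  ρ ∈ Q.rel ∧ (BranchArrow Q ρ.1 ∨ BranchArrow Q ρ.2)

/-- A relation `ρ = (α, β)` is isolated if the antipath `(α, β)` is a maximal
antipath, i.e. `ρ ∈ 𝒩`. -/
def Isolated (Q : QuivRel) (st : SigmaTau Q) (ρ : ℕ × ℕ) : Prop :=
  ρ ∈ Q.rel ∧ InN Q st (.arrows [ρ.1, ρ.2])

/-- `Q'` is obtained from `Q` by completing the relations from `R₀`, the new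
arrow attached to `ρ ∈ R₀` being `γ ρ`. -/
structure IsCompletion (Q : QuivRel) (R0 : Finset (ℕ × ℕ)) (γ : ℕ × ℕ → ℕ)
    (Q' : QuivRel) : Prop where
  subset : R0 ⊆ Q.rel
  fresh : ∀ ρ ∈ R0, γ ρ ∉ Q.A
  inj : ∀ ρ ∈ R0, ∀ ρ' ∈ R0, γ ρ = γ ρ' → ρ = ρ'
  V_eq : Q'.V = Q.V
  A_eq : Q'.A = Q.A ∪ R0.image γ
  src_old : ∀ a ∈ Q.A, Q'.src a = Q.src a
  tgt_old : ∀ a ∈ Q.A, Q'.tgt a = Q.tgt a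
  src_new : ∀ ρ ∈ R0, Q'.src (γ ρ) = Q.tgt ρ.1
  tgt_new : ∀ ρ ∈ R0, Q'.tgt (γ ρ) = Q.src ρ.2
  rel_eq : Q'.rel = Q.rel ∪ R0.image (fun ρ => (γ ρ, ρ.1)) ∪
      R0.image (fun ρ => (ρ.2, γ ρ))

/-- A 3-cycle: three pairwise distinct arrows forming an oriented cycle. -/
def Is3Cycle (Q : QuivRel) (a0 a1 a2 : ℕ) : Prop :=
  a0 ∈ Q.A ∧ a1 ∈ Q.A ∧ a2 ∈ Q.A ∧ a0 ≠ a1 ∧ a1 ≠ a2 ∧ a0 ≠ a2 ∧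
  Q.src a0 = Q.tgt a1 ∧ Q.src a1 = Q.tgt a2 ∧ Q.src a2 = Q.tgt a0

/-- A triangle: a 3-cycle all of whose three compositions are relations. -/
def IsTriangleTriple (Q : QuivRel) (a0 a1 a2 : ℕ) : Prop :=
  Is3Cycle Q a0 a1 a2 ∧ (a0, a1) ∈ Q.rel ∧ (a1, a2) ∈ Q.rel ∧ (a2, a0) ∈ Q.rel

/-- The (unordered) set of arrows of a triangle. -/
def TriangleSet (Q : QuivRel) (O : Finset ℕ) : Prop :=
  ∃ a0 a1 a2, O = {a0, a1, a2} ∧ IsTriangleTriple Q a0 a1 a2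

/-- Branch triangle: removing any two of its arrows disconnects the quiver. -/
def BranchTriangle (Q : QuivRel) (O : Finset ℕ) : Prop :=
  TriangleSet Q O ∧ ∀ S ⊆ O, S.card = 2 → ¬ Connected (deleteArrows Q S)

/-- Free relation: a relation neither of whose arrows lies in `𝒞`. -/
def FreeRel (Q : QuivRel) (st : SigmaTau Q) (ρ : ℕ × ℕ) : Prop :=
  ρ ∈ Q.rel ∧ ¬ InC Q st ρ.1 ∧ ¬ InC Q st ρ.2

/-- The class `𝒜`: gentle quivers with `f_𝚫 = m·[0,3] + [p+m+2, p]`. -/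
def ClassA (Q : QuivRel) (st : SigmaTau Q) : Prop :=
  IsGentle Q ∧ ∃ m p : ℕ, ∀ x, fInv Q st x = m * charFn 0 3 x + charFn (p + m + 2) p x

/-- The class `Ã`: gentle quivers with
`f_𝚫 = (m₁+m₂)·[0,3] + [p+m₁, p] + [q+m₂, q]`, `p+m₁ > 0`, `q+m₂ > 0`. -/
def ClassAtilde (Q : QuivRel) (st : SigmaTau Q) : Prop :=
  IsGentle Q ∧ ∃ m1 m2 p q : ℕ, 0 < p + m1 ∧ 0 < q + m2 ∧
    ∀ x, fInv Q st x =
      (m1 + m2) * charFn 0 3 x + charFn (p + m1) p x + charFn (q + m2) q x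

/-- Isomorphism of quivers with relations. -/
def IsoQR (Q Q' : QuivRel) : Prop :=
  ∃ fV fA : ℕ → ℕ,
    Set.BijOn fV ↑Q.V ↑Q'.V ∧ Set.BijOn fA ↑Q.A ↑Q'.A ∧
    (∀ a ∈ Q.A, Q'.src (fA a) = fV (Q.src a) ∧ Q'.tgt (fA a) = fV (Q.tgt a)) ∧
    (∀ a ∈ Q.A, ∀ b ∈ Q.A, ((a, b) ∈ Q.rel ↔ (fA a, fA b) ∈ Q'.rel))

/-- The quiver has no loops. -/
def NoLoops (Q : QuivRel) : Prop := ∀ a ∈ Q.A, Q.src a ≠ Q.tgt a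

/-- The reflection at `x` is defined: every arrow starting at `x` admits a
(necessarily unique) companion arrow ending at `x` not bound by a relation. -/
def CanReflect (Q : QuivRel) (x : ℕ) : Prop :=
  x ∈ Q.V ∧ ∀ a ∈ Q.A, Q.src a = x → ∃ b ∈ Q.A, Q.tgt b = x ∧ (a, b) ∉ Q.rel

/-- `Q'` is the reflection of the gentle loop-free quiver `Q` at the vertex
`x`, following Brenner–Butler tilting. -/
def IsReflection (Q : QuivRel) (x : ℕ) (Q' : QuivRel) : Prop :=
  IsGentle Q ∧ NoLoops Q ∧ CanReflect Q x ∧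
  Q'.V = Q.V ∧ Q'.A = Q.A ∧
  (∀ a ∈ Q.A, Q.tgt a = x → Q'.src a = x ∧ Q'.tgt a = Q.src a) ∧
  (∀ a ∈ Q.A, Q.src a = x →
    ∀ b ∈ Q.A, Q.tgt b = x → (a, b) ∉ Q.rel → Q'.src a = Q.src b) ∧
  (∀ a ∈ Q.A, Q.tgt a ≠ x → Q.src a ≠ x → Q'.src a = Q.src a) ∧
  (∀ a ∈ Q.A, Q.tgt a ≠ x →
    ((∃ b ∈ Q.A, Q.tgt b = x ∧ Q.src b = Q.tgt a ∧ (b, a) ∈ Q.rel) → Q'.tgt a = x) ∧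
    ((¬ ∃ b ∈ Q.A, Q.tgt b = x ∧ Q.src b = Q.tgt a ∧ (b, a) ∈ Q.rel) →
      Q'.tgt a = Q.tgt a)) ∧
  (∀ a b : ℕ, (a, b) ∈ Q'.rel ↔
    (((a, b) ∈ Q.rel ∧ Q.tgt a ≠ x ∧ Q.src a ≠ x) ∨
     (a ∈ Q.A ∧ b ∈ Q.A ∧ Q.src a = x ∧ Q.tgt b = x ∧ (a, b) ∉ Q.rel) ∨
     (a ∈ Q.A ∧ b ∈ Q.A ∧ Q.tgt a = x ∧
       ∃ c ∈ Q.A, c ≠ a ∧ Q.tgt c = x ∧ Q.src c = Q.tgt b ∧ (c, b) ∈ Q.rel)))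

/-- The opposite quiver with relations. -/
def opQR (Q : QuivRel) : QuivRel where
  V := Q.V
  A := Q.A
  src := Q.tgt
  tgt := Q.src
  rel := Q.rel.image fun ρ => (ρ.2, ρ.1)

/-- Coreflection: the dual of reflection. -/
def IsCoreflection (Q : QuivRel) (x : ℕ) (Q' : QuivRel) : Prop :=
  IsReflection (opQR Q) x (opQR Q')

/-- One step of reflection equivalence: a reflection, a coreflection, or an
isomorphism of quivers with relations. -/
def RefStep (Q Q' : QuivRel) : Prop :=
  (∃ x, IsReflection Q x Q') ∨ (∃ x, IsCoreflection Q x Q') ∨ IsoQR Q Q'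

/-- Reflection equivalence: a finite sequence of reflections/coreflections,
up to isomorphism of quivers with relations. -/
def RefEquiv : QuivRel → QuivRel → Prop := Relation.ReflTransGen RefStep

/-- A cyclic orientation of a `1`-cycle quiver without branch arrows (i.e. a
cycle): enumerations of the vertices and arrows by `ZMod n` such that the
`i`-th arrow joins the `i`-th and `(i+1)`-st vertices. -/
structure CyclicOrientation (Q : QuivRel) (n : ℕ) where
  ev : ZMod n → ℕ
  ea : ZMod n → ℕ
  ev_mem : ∀ i, ev i ∈ Q.V
  ea_mem : ∀ i, ea i ∈ Q.A
  ev_inj : Function.Injective ev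
  ea_inj : Function.Injective ea
  ev_surj : ∀ v ∈ Q.V, ∃ i, ev i = v
  ea_surj : ∀ a ∈ Q.A, ∃ i, ea i = a
  compat : ∀ i : ZMod n,
    (Q.src (ea i) = ev i ∧ Q.tgt (ea i) = ev (i + 1)) ∨
    (Q.src (ea i) = ev (i + 1) ∧ Q.tgt (ea i) = ev i)

/-- Clockwise arrow with respect to a cyclic orientation. -/
def Clockwise (Q : QuivRel) {n : ℕ} (co : CyclicOrientation Q n) (a : ℕ) : Prop :=
  a ∈ Q.A ∧ ∃ i : ZMod n, co.ea i = a ∧ Q.src a = co.ev i ∧ Q.tgt a = co.ev (i + 1)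

/-- Anticlockwise arrow with respect to a cyclic orientation. -/
def Anticlockwise (Q : QuivRel) {n : ℕ} (co : CyclicOrientation Q n) (a : ℕ) : Prop :=
  a ∈ Q.A ∧ ∃ i : ZMod n, co.ea i = a ∧ Q.src a = co.ev (i + 1) ∧ Q.tgt a = co.ev i

end GentleQuiv

namespace GentleQuiv

/-! A maximal antipath is determined by the signed vertex at which it terminates, and those signed
vertices are the ones at which no arrow starts; so `|𝒩| + |Δ₁| = 2|Δ₀|`. Every arrow outside `𝒞`
lies on exactly one maximal antipath, so the lengths of the elements of `𝒩` add up to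
`|Δ₁| - |𝒞|`. If `f_𝚫 = m·[0,3] + [p+m+2, p]`, then `𝒩` is a single orbit and `𝒞` consists of `m`
orbits of three arrows, whence `|Δ₀| = p + 2m + 1` and `|Δ₁| = p + 3m`: the first Betti number of
the graph is `m`. The indicator functions of the `m` orbits of `Ψ` are linearly independent
`1`-cycles, hence they span all `1`-cycles. In particular the `1`-cycle of a `3`-cycle is constant
on the orbits of `Ψ`, which forces the `3`-cycle to be one of these orbits. -/

section MaximalChain

open Relation Relator

variable {α : Type*} {r : α → α → Prop}

/-- A nonempty chain of `r` that cannot be prolonged at either end; the maximal antipaths of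
positive length are the maximal chains of the relation set of a quiver. -/
structure IsMaximalChain (r : α → α → Prop) (l : List α) : Prop where
  ne_nil : l ≠ []
  isChain : l.IsChain r
  not_rel_head : ∀ a ∈ l.head?, ∀ b, ¬ r b a
  not_rel_getLast : ∀ a ∈ l.getLast?, ∀ b, ¬ r a b

namespace IsMaximalChain

variable {l l' s s' t t' : List α} {a b : α}

theorem reverse (h : IsMaximalChain r l) : IsMaximalChain (flip r) l.reverse where
  ne_nil := by simpa only [ne_eq, List.reverse_eq_nil_iff] using h.ne_nil
  isChain := List.isChain_reverse.2 h.isChain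
  not_rel_head := by rw [List.head?_reverse]; exact h.not_rel_getLast
  not_rel_getLast := by rw [List.getLast?_reverse]; exact h.not_rel_head

theorem eq_of_append_cons (hr : RightUnique r) (h : IsMaximalChain r (s ++ a :: t))
    (h' : IsMaximalChain r (s' ++ a :: t')) : t = t' := by
  have hend := h.not_rel_getLast
  have hend' := h'.not_rel_getLast
  have hc := h.isChain.right_of_append
  have hc' := h'.isChain.right_of_append
  rw [List.getLast?_append_cons] at hend hend'
  clear h h'
  induction t generalizing a t' with
  | nil =>
    cases t' with
    | nil => rfl
    | cons b t' => exact absurd (List.isChain_cons_cons.1 hc').1 (hend a rfl b)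
  | cons b t ih =>
    cases t' with
    | nil => exact absurd (List.isChain_cons_cons.1 hc).1 (hend' a rfl b)
    | cons b' t' =>
      rw [List.isChain_cons_cons] at hc hc'
      obtain rfl := hr hc.1 hc'.1
      rw [ih hend hend' hc.2 hc'.2]

theorem append_cons_inj (hr : BiUnique r) (h : IsMaximalChain r (s ++ a :: t))
    (h' : IsMaximalChain r (s' ++ a :: t')) : s = s' ∧ t = t' := by
  refine ⟨List.reverse_injective ?_, eq_of_append_cons hr.2 h h'⟩
  have hrev := h.reverse
  have hrev' := h'.reverse
  simp only [List.reverse_append, List.reverse_cons, List.append_assoc, List.singleton_append]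
    at hrev hrev'
  exact eq_of_append_cons hr.1.flip hrev hrev'

theorem eq_of_mem (hr : BiUnique r) (h : IsMaximalChain r l) (h' : IsMaximalChain r l')
    (ha : a ∈ l) (ha' : a ∈ l') : l = l' := by
  obtain ⟨s, t, rfl⟩ := List.append_of_mem ha
  obtain ⟨s', t', rfl⟩ := List.append_of_mem ha'
  obtain ⟨rfl, rfl⟩ := append_cons_inj hr h h'
  rfl

theorem nodup (hr : BiUnique r) (h : IsMaximalChain r l) : l.Nodup := by
  refine List.nodup_iff_sublist.2 fun a ha => ?_
  obtain ⟨u, v, rfl, hau, hav⟩ := List.cons_sublist_iff.1 ha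
  obtain ⟨s, t, rfl⟩ := List.append_of_mem hau
  obtain ⟨s', t', rfl⟩ := List.append_of_mem (List.singleton_sublist.1 hav)
  have h₁ : IsMaximalChain r (s ++ a :: (t ++ (s' ++ a :: t'))) := by simpa using h
  have h₂ : IsMaximalChain r ((s ++ a :: (t ++ s')) ++ a :: t') := by simpa using h
  have hlen := congrArg List.length (append_cons_inj hr h₁ h₂).1
  simp only [List.length_append, List.length_cons] at hlen
  omega

theorem mem_of_rel (hr : RightUnique r) (h : IsMaximalChain r l) (hab : r a b) (ha : a ∈ l) :
    b ∈ l := by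
  obtain ⟨s, t, rfl⟩ := List.append_of_mem ha
  cases t with
  | nil => exact absurd hab (h.not_rel_getLast a (by simp) b)
  | cons c t =>
    obtain rfl := hr hab (List.isChain_cons_cons.1 h.isChain.right_of_append).1
    simp

theorem mem_iff_of_rel (hr : BiUnique r) (h : IsMaximalChain r l) (hab : r a b) :
    a ∈ l ↔ b ∈ l :=
  ⟨h.mem_of_rel hr.2 hab, fun hb => List.mem_reverse.1 <|
    h.reverse.mem_of_rel hr.1.flip hab (List.mem_reverse.2 hb)⟩

end IsMaximalChain

theorem exists_mem_rel_of_finite {S : Set α} (hS : S.Finite) (hr : LeftUnique r)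
    (hsucc : ∀ a ∈ S, ∃ b ∈ S, r a b) {b : α} (hb : b ∈ S) : ∃ a ∈ S, r a b := by
  choose! f hmaps hf using hsucc
  have hinj : S.InjOn f := fun x hx y hy hxy => hr (hf x hx) (hxy ▸ hf y hy)
  have himage : f '' S = S :=
    Set.eq_of_subset_of_ncard_le (Set.image_subset_iff.2 hmaps) hinj.ncard_image.ge hS
  obtain ⟨a, ha, rfl⟩ := himage.symm ▸ hb
  exact ⟨a, ha, hf a ha⟩

theorem exists_isMaximalChain_cons {a : α} (hr : LeftUnique r)
    (hfin : {x | ReflTransGen r a x}.Finite) (ha : ∀ b, ¬ r b a) :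
    ∃ l, IsMaximalChain r (a :: l) := by
  obtain ⟨b, hab, hb⟩ : ∃ b, ReflTransGen r a b ∧ ∀ c, ¬ r b c := by
    by_contra! hsucc
    obtain ⟨b, -, hba⟩ := exists_mem_rel_of_finite hfin hr
      (fun x hx => (hsucc x hx).imp fun c hc => ⟨hx.tail hc, hc⟩) ReflTransGen.refl
    exact ha b hba
  obtain ⟨l, hl, hlast⟩ := List.exists_isChain_cons_of_relationReflTransGen hab
  refine ⟨l, List.cons_ne_nil a l, hl, by simpa using ha, fun x hx => ?_⟩
  rw [List.getLast?_eq_some_getLast (List.cons_ne_nil a l), hlast, Option.mem_some_iff] at hx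
  exact hx ▸ hb

end MaximalChain

section Antipath

variable {Q : QuivRel} {st : SigmaTau Q} {a b : ℕ} {l l' : List ℕ} {w w' : Thread}

/-- The set of relations as a binary relation between arrows. -/
abbrev IsRel (Q : QuivRel) (a b : ℕ) : Prop := (a, b) ∈ Q.rel

/-- Every relation is a composable pair of arrows. -/
def RelsComposable (Q : QuivRel) : Prop :=
  ∀ ρ ∈ Q.rel, ρ.1 ∈ Q.A ∧ ρ.2 ∈ Q.A ∧ Q.src ρ.1 = Q.tgt ρ.2

/-- Every arrow starts and terminates at a vertex of the quiver. -/
def EndpointsMem (Q : QuivRel) : Prop := ∀ a ∈ Q.A, Q.src a ∈ Q.V ∧ Q.tgt a ∈ Q.V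

/-- The signed vertices `(x, ε)`, `ε = ±1`: the labels of the trivial antipaths. -/
def signedVertices (Q : QuivRel) : Finset (ℕ × ℤ) := Q.V ×ˢ {1, -1}

/-- The signed vertex `(sα, σα)` at which an arrow `α` starts. -/
def signedSource (st : SigmaTau Q) (a : ℕ) : ℕ × ℤ := (Q.src a, st.σ a)

/-- The signed vertex `(tα, τα)` at which an arrow `α` terminates. -/
def signedTarget (st : SigmaTau Q) (a : ℕ) : ℕ × ℤ := (Q.tgt a, st.τ a)

/-- The signed vertex `(tω, τω)` at which an antipath `ω` terminates. -/
def Thread.signedTarget (st : SigmaTau Q) (w : Thread) : ℕ × ℤ := (w.target Q, w.tauAnti st)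

theorem mem_signedVertices {x : ℕ × ℤ} :
    x ∈ signedVertices Q ↔ x.1 ∈ Q.V ∧ (x.2 = 1 ∨ x.2 = -1) := by
  simp [signedVertices]

theorem card_signedVertices (Q : QuivRel) : (signedVertices Q).card = 2 * Q.V.card := by
  rw [signedVertices, Finset.card_product, Finset.card_pair (by decide), mul_comm]

theorem injOn_signedSource (st : SigmaTau Q) : Set.InjOn (signedSource st) Q.A := by
  intro a ha b hb hab
  obtain ⟨hsrc, hσ⟩ := Prod.mk.inj hab
  by_contra hne
  have := st.σ_src a ha b hb hne hsrc
  have := st.σ_pm b hb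
  omega

theorem injOn_signedTarget (st : SigmaTau Q) : Set.InjOn (signedTarget st) Q.A := by
  intro a ha b hb hab
  obtain ⟨htgt, hτ⟩ := Prod.mk.inj hab
  by_contra hne
  have := st.τ_tgt a ha b hb hne htgt
  have := st.τ_pm b hb
  omega

theorem isRel_iff (st : SigmaTau Q) (h : RelsComposable Q) :
    IsRel Q a b ↔ a ∈ Q.A ∧ b ∈ Q.A ∧ signedSource st a = signedTarget st b := by
  constructor
  · intro hab
    obtain ⟨ha, hb, hcomp⟩ := h _ hab
    exact ⟨ha, hb, Prod.ext hcomp ((st.rel_iff a ha b hb hcomp).1 hab)⟩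
  · rintro ⟨ha, hb, hab⟩
    obtain ⟨hcomp, hsign⟩ := Prod.mk.inj hab
    exact (st.rel_iff a ha b hb hcomp).2 hsign

theorem biUnique_isRel (st : SigmaTau Q) (h : RelsComposable Q) :
    Relator.BiUnique (IsRel Q) := by
  simp only [Relator.BiUnique, Relator.LeftUnique, Relator.RightUnique, isRel_iff st h]
  exact ⟨fun a b c hac hbc => injOn_signedSource st hac.1 hbc.1 (hac.2.2.trans hbc.2.2.symm),
    fun a b c hab hac => injOn_signedTarget st hab.2.1 hac.2.1 (hab.2.2.symm.trans hac.2.2)⟩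

theorem finite_reflTransGen_isRel (h : RelsComposable Q) (ha : a ∈ Q.A) :
    {b | Relation.ReflTransGen (IsRel Q) a b}.Finite := by
  refine Q.A.finite_toSet.subset fun b hab => ?_
  cases hab with
  | refl => exact ha
  | tail _ hcb => exact (h _ hcb).2.1

theorem exists_signedSource_eq_iff (st : SigmaTau Q) (h : RelsComposable Q) (ha : a ∈ Q.A) :
    (∃ b ∈ Q.A, Q.src b = Q.tgt a ∧ st.σ b = st.τ a) ↔ ∃ b, IsRel Q b a := by
  simp only [isRel_iff st h, signedSource, signedTarget, Prod.mk.injEq, ha, true_and]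

theorem exists_signedTarget_eq_iff (st : SigmaTau Q) (h : RelsComposable Q) (ha : a ∈ Q.A) :
    (∃ b ∈ Q.A, Q.tgt b = Q.src a ∧ st.τ b = st.σ a) ↔ ∃ b, IsRel Q a b := by
  simp only [isRel_iff st h, signedSource, signedTarget, Prod.mk.injEq, ha, true_and,
    eq_comm (a := Q.src a), eq_comm (a := st.σ a)]

theorem inN_arrows_iff (h : RelsComposable Q) :
    InN Q st (.arrows l) ↔ (∀ a ∈ l, a ∈ Q.A) ∧ IsMaximalChain (IsRel Q) l := by
  rcases eq_or_ne l [] with rfl | hl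
  · exact ⟨fun hl => absurd rfl hl.1.1, fun hl => absurd rfl hl.2.ne_nil⟩
  have hhead := List.head?_eq_some_head hl
  have hlast := List.getLast?_eq_some_getLast hl
  by_cases hA : ∀ a ∈ l, a ∈ Q.A
  · have hends : InN Q st (.arrows l) ↔ IsAntiList Q l ∧
        (¬ ∃ b, IsRel Q b (l.head hl)) ∧ ¬ ∃ b, IsRel Q (l.getLast hl) b := by
      rw [← exists_signedSource_eq_iff st h (hA _ (List.head_mem hl)),
        ← exists_signedTarget_eq_iff st h (hA _ (List.getLast_mem hl)),
        ← List.head!_of_head? hhead, ← List.getLast!_of_getLast? hlast]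
      rfl
    rw [hends]
    constructor
    · rintro ⟨⟨-, -, hchain⟩, hh, ht⟩
      exact ⟨hA, hl, hchain, by simpa [hhead] using hh, by simpa [hlast] using ht⟩
    · rintro ⟨-, -, hchain, hh, ht⟩
      exact ⟨⟨hl, hA, hchain⟩, by simpa [hhead] using hh, by simpa [hlast] using ht⟩
  · exact ⟨fun hw => absurd hw.1.2.1 hA, fun hw => absurd hw.1 hA⟩

theorem exists_inN_arrows_cons (h : RelsComposable Q) (ha : a ∈ Q.A) (hmax : ∀ b, ¬ IsRel Q b a) :
    ∃ l, InN Q st (.arrows (a :: l)) := by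
  obtain ⟨l, hl⟩ := exists_isMaximalChain_cons (biUnique_isRel st h).1
    (finite_reflTransGen_isRel h ha) hmax
  refine ⟨l, (inN_arrows_iff h).2 ⟨?_, hl⟩⟩
  exact hl.isChain.induction (· ∈ Q.A) _ (fun x y hxy _ => (h _ hxy).2.1) fun _ => ha

theorem exists_eq_cons_of_inN_arrows (hw : InN Q st (.arrows l)) :
    ∃ a t, a ∈ Q.A ∧ l = a :: t := by
  obtain ⟨a, t, rfl⟩ := List.exists_cons_of_ne_nil hw.1.1
  exact ⟨a, t, hw.1.2.1 a List.mem_cons_self, rfl⟩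

theorem mapsTo_threadSignedTarget (he : EndpointsMem Q) :
    Set.MapsTo (Thread.signedTarget st) {w | InN Q st w}
      ↑(signedVertices Q \ Q.A.image (signedSource st)) := by
  intro w hw
  rw [Finset.mem_coe, Finset.mem_sdiff, mem_signedVertices, Finset.mem_image]
  constructor
  · cases w with
    | triv x ε => exact hw.1
    | arrows l =>
      obtain ⟨a, t, ha, rfl⟩ := exists_eq_cons_of_inN_arrows hw
      exact ⟨(he a ha).2, st.τ_pm a ha⟩
  · rintro ⟨a, ha, hw'⟩
    obtain ⟨hsrc, hσ⟩ := Prod.mk.inj hw'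
    exact hw.2.1 ⟨a, ha, hsrc, hσ⟩

theorem injOn_threadSignedTarget (h : RelsComposable Q) :
    Set.InjOn (Thread.signedTarget st) {w | InN Q st w} := by
  intro w hw w' hw' heq
  cases w with
  | triv x ε =>
    cases w' with
    | triv x' ε' =>
      obtain ⟨rfl, rfl⟩ : x = x' ∧ ε = ε' := Prod.mk.inj heq
      rfl
    | arrows l' =>
      obtain ⟨a, t, ha, rfl⟩ := exists_eq_cons_of_inN_arrows hw'
      exact absurd ⟨a, ha, (Prod.mk.inj heq.symm).1, (Prod.mk.inj heq.symm).2⟩ hw.2.2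
  | arrows l =>
    obtain ⟨a, t, ha, rfl⟩ := exists_eq_cons_of_inN_arrows hw
    cases w' with
    | triv x' ε' => exact absurd ⟨a, ha, (Prod.mk.inj heq).1, (Prod.mk.inj heq).2⟩ hw'.2.2
    | arrows l' =>
      obtain ⟨a', t', ha', rfl⟩ := exists_eq_cons_of_inN_arrows hw'
      obtain rfl : a = a' := injOn_signedTarget st ha ha' heq
      exact congrArg Thread.arrows <| ((inN_arrows_iff h).1 hw).2.eq_of_mem (biUnique_isRel st h)
        ((inN_arrows_iff h).1 hw').2 List.mem_cons_self List.mem_cons_self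

theorem surjOn_threadSignedTarget (h : RelsComposable Q) :
    Set.SurjOn (Thread.signedTarget st) {w | InN Q st w}
      ↑(signedVertices Q \ Q.A.image (signedSource st)) := by
  rintro x hx
  rw [Finset.mem_coe, Finset.mem_sdiff, mem_signedVertices, Finset.mem_image] at hx
  obtain ⟨hxV, hxA⟩ := hx
  by_cases hb : ∃ b ∈ Q.A, signedTarget st b = x
  · obtain ⟨b, hb, rfl⟩ := hb
    have hmax : ∀ a, ¬ IsRel Q a b := fun a hab =>
      hxA ⟨a, ((isRel_iff st h).1 hab).1, ((isRel_iff st h).1 hab).2.2⟩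
    obtain ⟨l, hl⟩ := exists_inN_arrows_cons h hb hmax
    exact ⟨_, hl, rfl⟩
  · refine ⟨.triv x.1 x.2, ⟨hxV, ?_, ?_⟩, rfl⟩
    · rintro ⟨a, ha, hsrc, hσ⟩
      exact hxA ⟨a, ha, Prod.ext hsrc hσ⟩
    · rintro ⟨b, hbA, htgt, hτ⟩
      exact hb ⟨b, hbA, Prod.ext htgt hτ⟩

theorem bijOn_threadSignedTarget (st : SigmaTau Q) (h : RelsComposable Q) (he : EndpointsMem Q) :
    Set.BijOn (Thread.signedTarget st) {w | InN Q st w}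
      ↑(signedVertices Q \ Q.A.image (signedSource st)) :=
  ⟨mapsTo_threadSignedTarget he, injOn_threadSignedTarget h, surjOn_threadSignedTarget h⟩

theorem finite_setOf_inN (st : SigmaTau Q) (h : RelsComposable Q) (he : EndpointsMem Q) :
    {w | InN Q st w}.Finite :=
  (bijOn_threadSignedTarget st h he).finite_iff_finite.2 (Finset.finite_toSet _)

theorem ncard_setOf_inN_add_card (st : SigmaTau Q) (h : RelsComposable Q) (he : EndpointsMem Q) :
    {w | InN Q st w}.ncard + Q.A.card = 2 * Q.V.card := by
  have hsub : Q.A.image (signedSource st) ⊆ signedVertices Q :=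
    Finset.image_subset_iff.2 fun a ha => mem_signedVertices.2 ⟨(he a ha).1, st.σ_pm a ha⟩
  rw [(bijOn_threadSignedTarget st h he).ncard_eq, Set.ncard_coe_finset,
    ← Finset.card_image_of_injOn (injOn_signedSource st),
    Finset.card_sdiff_add_card_eq_card hsub, card_signedVertices]

/-- The arrows occurring in a thread. -/
def Thread.arrowSet : Thread → Finset ℕ
  | .triv _ _ => ∅
  | .arrows l => l.toFinset

theorem mem_arrowSet_iff : a ∈ w.arrowSet ↔ ∃ l, w = .arrows l ∧ a ∈ l := by
  cases w <;> simp [Thread.arrowSet]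

theorem card_arrowSet (h : RelsComposable Q) (hw : InN Q st w) : w.arrowSet.card = w.len := by
  cases w with
  | triv x ε => rfl
  | arrows l =>
    exact List.toFinset_card_of_nodup (((inN_arrows_iff h).1 hw).2.nodup (biUnique_isRel st h))

theorem pairwiseDisjoint_arrowSet (st : SigmaTau Q) (h : RelsComposable Q) :
    {w | InN Q st w}.PairwiseDisjoint Thread.arrowSet := by
  intro w hw w' hw' hne
  refine Finset.disjoint_left.2 fun a ha ha' => hne ?_
  obtain ⟨l, rfl, hal⟩ := mem_arrowSet_iff.1 ha
  obtain ⟨l', rfl, hal'⟩ := mem_arrowSet_iff.1 ha'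
  exact congrArg Thread.arrows <| ((inN_arrows_iff h).1 hw).2.eq_of_mem (biUnique_isRel st h)
    ((inN_arrows_iff h).1 hw').2 hal hal'

theorem qN_setOf_inN_add_ncard (st : SigmaTau Q) (h : RelsComposable Q) (he : EndpointsMem Q) :
    qN {w | InN Q st w} + {a | InC Q st a}.ncard = Q.A.card := by
  classical
  set N := (finite_setOf_inN st h he).toFinset with hN
  have hmem (w : Thread) : w ∈ N ↔ InN Q st w := by simp [hN]
  have hq : qN {w | InN Q st w} = (N.biUnion Thread.arrowSet).card := by
    rw [qN, finsum_mem_eq_finite_toFinset_sum _ (finite_setOf_inN st h he), Finset.card_biUnion]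
    · exact Finset.sum_congr rfl fun w hw => (card_arrowSet h ((hmem w).1 hw)).symm
    · exact fun w hw w' hw' => pairwiseDisjoint_arrowSet st h ((hmem w).1 hw) ((hmem w').1 hw')
  have hunion : N.biUnion Thread.arrowSet ⊆ Q.A := by
    simp only [Finset.biUnion_subset, hmem]
    intro w hw a ha
    obtain ⟨l, rfl, hal⟩ := mem_arrowSet_iff.1 ha
    exact hw.1.2.1 a hal
  have hC : {a | InC Q st a} = ↑(Q.A \ N.biUnion Thread.arrowSet) := by
    ext a
    simp only [InC, Finset.coe_sdiff, Set.mem_sdiff, Finset.mem_coe, Finset.mem_biUnion, hmem,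
      mem_arrowSet_iff, Set.mem_ofPred_eq]
    grind
  rw [hq, hC, Set.ncard_coe_finset, add_comm, Finset.card_sdiff_add_card_eq_card hunion]

end Antipath

section Psi

open Relation Relator

theorem iff_of_eqvGen {α : Type*} {r : α → α → Prop} {p : α → Prop}
    (hp : ∀ x y, r x y → (p x ↔ p y)) {x y : α} (hxy : EqvGen r x y) : p x ↔ p y :=
  (Equivalence.comap ⟨Iff.refl, Iff.symm, Iff.trans⟩ p).eqvGen_iff.1 (hxy.mono hp)

theorem ncard_setOf_sameCycle {α : Type*} (σ : Equiv.Perm α) (x : α) :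
    {y | σ.SameCycle x y}.ncard = Function.minimalPeriod σ x := by
  have horbit : {y | σ.SameCycle x y} = MulAction.orbit (Subgroup.zpowers σ) x := by
    ext y
    exact (Subgroup.exists_zpowers (p := fun g : Subgroup.zpowers σ => g • x = y)).symm
  rw [horbit, ← Nat.card_coe_set_eq, Nat.card_congr (MulAction.orbitZPowersEquiv σ x),
    Nat.card_zmod]
  rfl

variable {Q : QuivRel} {st : SigmaTau Q} {a b : ℕ} {O O' : Set ℕ}

theorem finite_setOf_inC (st : SigmaTau Q) : {a | InC Q st a}.Finite :=
  Q.A.finite_toSet.subset fun _ ha => ha.1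

theorem inC_iff_of_isRel (h : RelsComposable Q) (hab : IsRel Q a b) :
    InC Q st a ↔ InC Q st b := by
  have hmem (l : List ℕ) : (InN Q st (.arrows l) ∧ a ∈ l) ↔ (InN Q st (.arrows l) ∧ b ∈ l) :=
    and_congr_right fun hl =>
      ((inN_arrows_iff h).1 hl).2.mem_iff_of_rel (biUnique_isRel st h) hab
  simp only [InC, hmem, (h _ hab).1, (h _ hab).2.1]

theorem psiRel_iff (h : RelsComposable Q) : PsiRel Q st a b ↔ InC Q st a ∧ IsRel Q a b := by
  constructor
  · rintro ⟨ha, hb, htgt, hτ⟩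
    exact ⟨ha, (isRel_iff st h).2 ⟨ha.1, hb.1, Prod.ext htgt.symm hτ.symm⟩⟩
  · rintro ⟨ha, hab⟩
    obtain ⟨htgt, hτ⟩ := Prod.mk.inj ((isRel_iff st h).1 hab).2.2
    exact ⟨ha, (inC_iff_of_isRel h hab).1 ha, htgt.symm, hτ.symm⟩

theorem biUnique_psiRel (st : SigmaTau Q) (h : RelsComposable Q) : BiUnique (PsiRel Q st) := by
  simp only [BiUnique, LeftUnique, RightUnique, psiRel_iff h]
  exact ⟨fun _ _ _ hac hbc => (biUnique_isRel st h).1 hac.2 hbc.2,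
    fun _ _ _ hab hac => (biUnique_isRel st h).2 hab.2 hac.2⟩

theorem exists_psiRel_left (h : RelsComposable Q) (hb : InC Q st b) : ∃ a, PsiRel Q st a b := by
  obtain ⟨a, hab⟩ : ∃ a, IsRel Q a b := by
    by_contra! hmax
    obtain ⟨l, hl⟩ := exists_inN_arrows_cons (st := st) h hb.1 hmax
    exact hb.2 ⟨_, hl, List.mem_cons_self⟩
  exact ⟨a, (psiRel_iff h).2 ⟨(inC_iff_of_isRel h hab).2 hb, hab⟩⟩

theorem exists_psiRel_right (h : RelsComposable Q) (ha : InC Q st a) : ∃ b, PsiRel Q st a b := by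
  obtain ⟨b, -, hab⟩ := exists_mem_rel_of_finite (r := flip (PsiRel Q st)) (finite_setOf_inC st)
    (fun _ _ _ hba hca => (biUnique_psiRel st h).2 hba hca)
    (fun b hb => (exists_psiRel_left h hb).imp fun a hab => ⟨hab.1, hab⟩) ha
  exact ⟨b, hab⟩

theorem exists_perm_psiRel (st : SigmaTau Q) (h : RelsComposable Q) :
    ∃ ψ : Equiv.Perm ℕ, (∀ a, InC Q st a → PsiRel Q st a (ψ a)) ∧ ∀ a, ¬ InC Q st a → ψ a = a := by
  classical
  have hright (a : {a // InC Q st a}) : ∃ b : {a // InC Q st a}, PsiRel Q st a b :=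
    (exists_psiRel_right h a.2).elim fun b hab => ⟨⟨b, hab.2.1⟩, hab⟩
  choose f hf using hright
  have hbij : f.Bijective := by
    constructor
    · exact fun a b hab => Subtype.ext ((biUnique_psiRel st h).1 (hf a) (hab ▸ hf b))
    · intro b
      obtain ⟨a, hab⟩ := exists_psiRel_left h b.2
      exact ⟨⟨a, hab.1⟩, Subtype.ext ((biUnique_psiRel st h).2 (hf ⟨a, hab.1⟩) hab)⟩
  refine ⟨Equiv.Perm.ofSubtype (Equiv.ofBijective f hbij), fun a ha => ?_, fun a ha => ?_⟩
  · rw [Equiv.Perm.ofSubtype_apply_of_mem _ ha]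
    exact hf ⟨a, ha⟩
  · exact Equiv.Perm.ofSubtype_apply_of_not_mem _ ha

/-- The bijection `Ψ : 𝒞 → 𝒞`, extended by the identity to a permutation of `ℕ`. -/
noncomputable def psi (st : SigmaTau Q) (h : RelsComposable Q) : Equiv.Perm ℕ :=
  (exists_perm_psiRel st h).choose

theorem psiRel_psi (h : RelsComposable Q) (ha : InC Q st a) : PsiRel Q st a (psi st h a) :=
  (exists_perm_psiRel st h).choose_spec.1 a ha

theorem psi_of_not_inC (h : RelsComposable Q) (ha : ¬ InC Q st a) : psi st h a = a :=
  (exists_perm_psiRel st h).choose_spec.2 a ha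

theorem eqvGen_psi (h : RelsComposable Q) (a : ℕ) : EqvGen (PsiRel Q st) a (psi st h a) := by
  by_cases ha : InC Q st a
  · exact .rel _ _ (psiRel_psi h ha)
  · exact (psi_of_not_inC h ha).symm ▸ .refl a

theorem eqvGen_psiRel_iff_sameCycle (h : RelsComposable Q) :
    EqvGen (PsiRel Q st) a b ↔ (psi st h).SameCycle a b := by
  constructor
  · intro hab
    refine (Equiv.Perm.SameCycle.equivalence (psi st h)).eqvGen_iff.1 (hab.mono ?_)
    intro x y hxy
    exact (biUnique_psiRel st h).2 (psiRel_psi h hxy.1) hxy ▸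
      (Equiv.Perm.SameCycle.refl _ x).apply_right
  · rintro ⟨n, rfl⟩
    have hstep (n : ℤ) :
        EqvGen (PsiRel Q st) ((psi st h ^ n) a) ((psi st h ^ (n + 1)) a) := by
      rw [add_comm, zpow_one_add]
      exact eqvGen_psi h _
    induction n using Int.induction_on with
    | zero => exact .refl a
    | succ n ih => exact ih.trans _ _ _ (hstep n)
    | pred n ih =>
      have hpred := hstep (-n - 1)
      rw [sub_add_cancel] at hpred
      exact ih.trans _ _ _ (hpred.symm _ _)

theorem COrbit.eq_setOf_eqvGen (hO : COrbit Q st O) (ha : a ∈ O) :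
    O = {b | EqvGen (PsiRel Q st) a b} := by
  obtain ⟨c, -, rfl⟩ := hO
  ext b
  exact ⟨fun hcb => (EqvGen.symm _ _ ha).trans _ _ _ hcb, fun hab => EqvGen.trans _ _ _ ha hab⟩

theorem cOrbit_setOf_sameCycle (h : RelsComposable Q) (ha : InC Q st a) :
    COrbit Q st {b | (psi st h).SameCycle a b} := by
  simp only [← eqvGen_psiRel_iff_sameCycle]
  exact ⟨a, ha, rfl⟩

theorem COrbit.nonempty (hO : COrbit Q st O) : O.Nonempty := by
  obtain ⟨a, -, rfl⟩ := hO
  exact ⟨a, .refl a⟩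

theorem COrbit.subset_setOf_inC (hO : COrbit Q st O) : O ⊆ {a | InC Q st a} := by
  obtain ⟨a, ha, rfl⟩ := hO
  exact fun b hab => (iff_of_eqvGen (fun _ _ h => iff_of_true h.1 h.2.1) hab).1 ha

theorem COrbit.psi_mem_iff (h : RelsComposable Q) (hO : COrbit Q st O) :
    psi st h a ∈ O ↔ a ∈ O := by
  obtain ⟨c, -, rfl⟩ := hO
  exact ⟨fun hc => EqvGen.trans _ _ _ hc ((eqvGen_psi h a).symm _ _),
    fun hc => EqvGen.trans _ _ _ hc (eqvGen_psi h a)⟩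

theorem pairwiseDisjoint_cOrbit (st : SigmaTau Q) : {O | COrbit Q st O}.PairwiseDisjoint id := by
  intro O hO O' hO' hne
  refine Set.disjoint_left.2 fun a ha ha' => hne ?_
  rw [hO.eq_setOf_eqvGen ha, hO'.eq_setOf_eqvGen ha']

theorem iUnion_cOrbit (st : SigmaTau Q) : ⋃ O ∈ {O | COrbit Q st O}, O = {a | InC Q st a} :=
  Set.Subset.antisymm (Set.iUnion₂_subset fun _ hO => hO.subset_setOf_inC)
    fun a ha => Set.mem_biUnion ⟨a, ha, rfl⟩ (.refl a)

theorem finite_setOf_cOrbit (st : SigmaTau Q) : {O | COrbit Q st O}.Finite :=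
  (finite_setOf_inC st).finite_subsets.subset fun _ hO => hO.subset_setOf_inC

theorem ncard_setOf_inC_eq_mul {n : ℕ} (hn : ∀ O, COrbit Q st O → O.ncard = n) :
    {a | InC Q st a}.ncard = {O | COrbit Q st O}.ncard * n := by
  have hfin := finite_setOf_cOrbit st
  rw [← iUnion_cOrbit, hfin.ncard_biUnion
    (fun O hO => (finite_setOf_inC st).subset hO.subset_setOf_inC) (pairwiseDisjoint_cOrbit st),
    finsum_mem_eq_finite_toFinset_sum _ hfin, Set.ncard_eq_toFinset_card _ hfin]
  exact Finset.sum_const_nat fun O hO => hn O (hfin.mem_toFinset.1 hO)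

theorem minimalPeriod_psi {n : ℕ} (h : RelsComposable Q) (hn : ∀ O, COrbit Q st O → O.ncard = n)
    (ha : InC Q st a) : Function.minimalPeriod (psi st h) a = n := by
  rw [← ncard_setOf_sameCycle, hn _ (cOrbit_setOf_sameCycle h ha)]

theorem is3Cycle_psi (h : RelsComposable Q) (hn : ∀ O, COrbit Q st O → O.ncard = 3)
    (ha : InC Q st a) :
    Is3Cycle Q a (psi st h a) (psi st h (psi st h a)) := by
  obtain ⟨hper, hfix⟩ := Function.minimalPeriod_eq_prime_iff.1 (minimalPeriod_psi h hn ha)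
  have hψ₁ := psiRel_psi h ha
  have hψ₂ := psiRel_psi h hψ₁.2.1
  have hψ₃ := psiRel_psi h hψ₂.2.1
  have hthree : psi st h (psi st h (psi st h a)) = a := hper
  rw [hthree] at hψ₃
  refine ⟨ha.1, hψ₁.2.1.1, hψ₂.2.1.1, fun he => hfix he.symm,
    fun he => hfix ((psi st h).injective he).symm, fun he => hfix ?_, hψ₁.2.2.1.symm,
    hψ₂.2.2.1.symm, hψ₃.2.2.1.symm⟩
  exact (congrArg _ he).trans hthree

end Psi

section Homology

variable {Q : QuivRel} {st : SigmaTau Q} {x y : ℕ}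

/-- The boundary map `Δ₁ → Δ₀` of the underlying graph, over `ℚ`. The `0`-chains live on
all of `ℕ`, which contains `Δ₀`; this does not affect the kernel. -/
noncomputable def boundary (Q : QuivRel) : (Q.A → ℚ) →ₗ[ℚ] (ℕ →₀ ℚ) :=
  Fintype.linearCombination ℚ fun a =>
    Finsupp.single (Q.tgt a) 1 - Finsupp.single (Q.src a) 1

theorem boundary_apply (v : Q.A → ℚ) : boundary Q v =
    ∑ a, v a • (Finsupp.single (Q.tgt a) (1 : ℚ) - Finsupp.single (Q.src a) 1) :=
  Fintype.linearCombination_apply ..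

theorem boundary_single (a : Q.A) : boundary Q (Pi.single a 1) =
    Finsupp.single (Q.tgt a) 1 - Finsupp.single (Q.src a) 1 := by
  rw [boundary, Fintype.linearCombination_apply_single, one_smul]

theorem single_sub_single_mem_range_boundary (hxy : Relation.ReflTransGen (Adj Q) x y) :
    Finsupp.single y 1 - Finsupp.single x 1 ∈ LinearMap.range (boundary Q) := by
  induction hxy with
  | refl => rw [sub_self]; exact zero_mem _
  | @tail y z _ hyz ih =>
    have hstep : Finsupp.single z 1 - Finsupp.single y 1 ∈ LinearMap.range (boundary Q) := by
      obtain ⟨a, ha, ⟨rfl, rfl⟩ | ⟨rfl, rfl⟩⟩ := hyz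
      · exact ⟨Pi.single ⟨a, ha⟩ 1, boundary_single _⟩
      · exact ⟨-Pi.single ⟨a, ha⟩ 1, by rw [map_neg, boundary_single, neg_sub]⟩
    rw [← sub_add_sub_cancel]
    exact add_mem hstep ih

theorem card_V_le_finrank_range_boundary_add_one (hconn : Connected Q) :
    Q.V.card ≤ Module.finrank ℚ (LinearMap.range (boundary Q)) + 1 := by
  rcases Q.V.eq_empty_or_nonempty with hV | ⟨x, hx⟩
  · simp [hV]
  let e : ℕ → ℕ →₀ ℚ := fun y => Finsupp.single y 1
  have hspan : Submodule.span ℚ (Set.range fun y : Q.V => e y) ≤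
      LinearMap.range (boundary Q) ⊔ Submodule.span ℚ {e x} := by
    rw [Submodule.span_le]
    rintro _ ⟨y, rfl⟩
    have hy := Submodule.add_mem_sup (single_sub_single_mem_range_boundary (hconn x hx y y.2))
      (Submodule.mem_span_singleton_self (R := ℚ) (e x))
    rwa [sub_add_cancel] at hy
  have hindep : LinearIndependent ℚ fun y : Q.V => e y :=
    (Finsupp.linearIndependent_single_one ℚ ℕ).comp _ Subtype.val_injective
  calc Q.V.card
      = Module.finrank ℚ (Submodule.span ℚ (Set.range fun y : Q.V => e y)) := by
        rw [finrank_span_eq_card hindep, Fintype.card_coe]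
    _ ≤ Module.finrank ℚ ↥(LinearMap.range (boundary Q) ⊔ Submodule.span ℚ {e x}) :=
        Submodule.finrank_mono hspan
    _ ≤ Module.finrank ℚ (LinearMap.range (boundary Q)) +
          Module.finrank ℚ (Submodule.span ℚ {e x}) :=
        Submodule.finrank_add_le_finrank_add_finrank _ _
    _ = Module.finrank ℚ (LinearMap.range (boundary Q)) + 1 := by
        rw [finrank_span_singleton (by simp [e])]

theorem finrank_ker_boundary_add_card_V_le (hconn : Connected Q) :
    Module.finrank ℚ (LinearMap.ker (boundary Q)) + Q.V.card ≤ Q.A.card + 1 := by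
  have hrank := (boundary Q).finrank_range_add_finrank_ker
  rw [Module.finrank_fintype_fun_eq_card, Fintype.card_coe] at hrank
  have := card_V_le_finrank_range_boundary_add_one hconn
  omega

theorem linearIndependent_indicator_one {ι α R : Type*} [Ring R] {S : ι → Set α}
    (hne : ∀ i, (S i).Nonempty) (hdisj : Pairwise (Function.onFun Disjoint S)) :
    LinearIndependent R fun i => (S i).indicator (1 : α → R) := by
  refine linearIndependent_iff'.2 fun s g hg i hi => ?_
  obtain ⟨a, ha⟩ := hne i
  have hother (j : ι) (hji : j ≠ i) : a ∉ S j := Set.disjoint_right.1 (hdisj hji) ha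
  have happly := congrFun hg a
  rw [Finset.sum_apply, Finset.sum_eq_single i] at happly
  · simpa [ha] using happly
  · intro j _ hji
    simp [hother j hji]
  · exact fun hni => absurd hi hni

/-- The indicator function of a set of arrows, as a `1`-chain. -/
noncomputable def indicatorChain (Q : QuivRel) (O : Set ℕ) : Q.A → ℚ :=
  (Subtype.val ⁻¹' O).indicator 1

theorem boundary_indicatorChain (h : RelsComposable Q) {O : Set ℕ} (hO : COrbit Q st O) :
    boundary Q (indicatorChain Q O) = 0 := by
  classical
  let F (a : ℕ) : ℕ →₀ ℚ := if a ∈ O then Finsupp.single (Q.tgt a) 1 else 0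
  have hsupp : {a | psi st h a ≠ a} ⊆ Q.A := fun a ha => by
    by_contra hA
    exact ha (psi_of_not_inC h fun hC => hA hC.1)
  have hterm (a : Q.A) : indicatorChain Q O a •
      (Finsupp.single (Q.tgt a) (1 : ℚ) - Finsupp.single (Q.src a) 1) = F a - F (psi st h a) := by
    by_cases ha : (a : ℕ) ∈ O
    · rw [← (psiRel_psi h (hO.subset_setOf_inC ha)).2.2.1]
      simp [indicatorChain, F, ha, hO.psi_mem_iff h]
    · simp [indicatorChain, F, ha, hO.psi_mem_iff h]
  rw [boundary_apply, Finset.sum_congr rfl fun a _ => hterm a,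
    Finset.sum_coe_sort Q.A fun a => F a - F (psi st h a), Finset.sum_sub_distrib,
    Equiv.Perm.sum_comp (psi st h) Q.A F hsupp, sub_self]

/-- The span of the indicator `1`-chains of the `Ψ`-orbits in `𝒞`. -/
noncomputable def orbitSpan (st : SigmaTau Q) : Submodule ℚ (Q.A → ℚ) :=
  Submodule.span ℚ (Set.range fun O : {O // COrbit Q st O} => indicatorChain Q O)

theorem finrank_orbitSpan (st : SigmaTau Q) :
    Module.finrank ℚ (orbitSpan st) = {O | COrbit Q st O}.ncard := by
  have : Fintype {O // COrbit Q st O} := (finite_setOf_cOrbit st).fintype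
  have hindep : LinearIndependent ℚ fun O : {O // COrbit Q st O} => indicatorChain Q O := by
    refine linearIndependent_indicator_one (fun O => ?_) fun O O' hne => ?_
    · obtain ⟨a, ha⟩ := O.2.nonempty
      exact ⟨⟨a, (O.2.subset_setOf_inC ha).1⟩, ha⟩
    · exact (pairwiseDisjoint_cOrbit st O.2 O'.2 (Subtype.coe_ne_coe.2 hne)).preimage _
  rw [orbitSpan, finrank_span_eq_card hindep, ← Nat.card_coe_set_eq, ← Nat.card_eq_fintype_card]
  rfl

theorem orbitSpan_eq_ker_boundary (h : RelsComposable Q) (hconn : Connected Q)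
    (hle : Q.A.card + 1 ≤ Q.V.card + {O | COrbit Q st O}.ncard) :
    orbitSpan st = LinearMap.ker (boundary Q) := by
  refine Submodule.eq_of_le_of_finrank_le (Submodule.span_le.2 ?_) ?_
  · rintro _ ⟨O, rfl⟩
    exact boundary_indicatorChain h O.2
  · have := finrank_ker_boundary_add_card_V_le hconn
    rw [finrank_orbitSpan]
    omega

theorem inC_of_mem_orbitSpan {v : Q.A → ℚ} (hv : v ∈ orbitSpan st) {a : Q.A} (ha : v a ≠ 0) :
    InC Q st a := by
  contrapose! ha
  suffices orbitSpan st ≤ LinearMap.ker (LinearMap.proj (R := ℚ) (φ := fun _ : Q.A => ℚ) a) from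
    this hv
  rw [orbitSpan, Submodule.span_le]
  rintro _ ⟨O, rfl⟩
  have haO : (a : ℕ) ∉ O.1 := fun haO => ha (O.2.subset_setOf_inC haO)
  exact Set.indicator_of_notMem (s := Subtype.val ⁻¹' O.1) haO 1

theorem apply_psi_of_mem_orbitSpan (h : RelsComposable Q) {v : Q.A → ℚ} (hv : v ∈ orbitSpan st)
    {a b : Q.A} (hab : psi st h a = b) : v b = v a := by
  induction hv using Submodule.span_induction with
  | mem _ hO =>
    obtain ⟨O, rfl⟩ := hO
    have hmem : (b : ℕ) ∈ O.1 ↔ (a : ℕ) ∈ O.1 := hab ▸ O.2.psi_mem_iff h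
    exact Set.indicator_eq_indicator hmem rfl
  | zero => rfl
  | add u v _ _ hu hv => rw [Pi.add_apply, Pi.add_apply, hu, hv]
  | smul t v _ hv => rw [Pi.smul_apply, Pi.smul_apply, hv]

end Homology

section ThreeCycles

variable {Q : QuivRel} {st : SigmaTau Q} {x a b c : ℕ}

theorem SigmaTau.not_src_eq_and_src_eq (st : SigmaTau Q) (ha : a ∈ Q.A) (hb : b ∈ Q.A)
    (hc : c ∈ Q.A) (hab : a ≠ b) (hbc : b ≠ c) (hac : a ≠ c) :
    ¬ (Q.src a = Q.src b ∧ Q.src b = Q.src c) := by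
  rintro ⟨hsrc, hsrc'⟩
  have := st.σ_src a ha b hb hab hsrc
  have := st.σ_src b hb c hc hbc hsrc'
  have := st.σ_src a ha c hc hac (hsrc.trans hsrc')
  have := st.σ_pm a ha
  omega

theorem Is3Cycle.inC_and_psi_mem (h : RelsComposable Q)
    (hker : LinearMap.ker (boundary Q) ≤ orbitSpan st) (hcyc : Is3Cycle Q a b c)
    (hx : x ∈ ({a, b, c} : Set ℕ)) :
    InC Q st x ∧ psi st h x ∈ ({a, b, c} : Set ℕ) := by
  obtain ⟨ha, hb, hc, hab, hbc, hac, hab', hbc', hca'⟩ := hcyc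
  let v : Q.A → ℚ := Pi.single ⟨a, ha⟩ 1 + Pi.single ⟨b, hb⟩ 1 + Pi.single ⟨c, hc⟩ 1
  have hv : v ∈ orbitSpan st := hker <| by
    rw [LinearMap.mem_ker, map_add, map_add, boundary_single, boundary_single, boundary_single,
      hab', hbc', hca']
    abel
  have hvx (y : ℕ) (hy : y ∈ Q.A) : v ⟨y, hy⟩ ≠ 0 ↔ y ∈ ({a, b, c} : Set ℕ) := by
    simp only [v, Pi.add_apply, Pi.single_apply, Subtype.mk.injEq, Set.mem_insert_iff,
      Set.mem_singleton_iff]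
    grind
  have hxA : x ∈ Q.A := by
    rcases hx with rfl | rfl | rfl <;> assumption
  have hxC : InC Q st x := inC_of_mem_orbitSpan hv ((hvx x hxA).2 hx)
  have hψA := (psiRel_psi h hxC).2.1.1
  refine ⟨hxC, (hvx _ hψA).1 ?_⟩
  rw [apply_psi_of_mem_orbitSpan h hv (a := ⟨x, hxA⟩) rfl]
  exact (hvx x hxA).2 hx

theorem Is3Cycle.psi_eq (h : RelsComposable Q) (h₃ : ∀ O, COrbit Q st O → O.ncard = 3)
    (hker : LinearMap.ker (boundary Q) ≤ orbitSpan st) (hcyc : Is3Cycle Q a b c) :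
    psi st h a = b ∧ psi st h b = c := by
  obtain ⟨haC, hψa⟩ := hcyc.inC_and_psi_mem h hker (x := a) (by simp)
  obtain ⟨-, -, -, ha_ne, hψ_ne, hψψ_ne, hsrc, hsrc', -⟩ := is3Cycle_psi h h₃ haC
  obtain ⟨ha, hb, hc, hab, hbc, hac, hab', hbc', -⟩ := id hcyc
  rcases hψa with hψa | hψa | hψa
  · exact absurd hψa.symm ha_ne
  · rw [hψa] at hψ_ne hψψ_ne ⊢
    obtain ⟨-, hψb | hψb | hψb⟩ := hcyc.inC_and_psi_mem h hker (x := b) (by simp)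
    exacts [absurd hψb.symm hψψ_ne, absurd hψb.symm hψ_ne, ⟨rfl, hψb⟩]
  · rw [Set.mem_singleton_iff] at hψa
    rw [hψa] at hψ_ne hψψ_ne hsrc hsrc'
    obtain ⟨-, hψc | hψc | hψc⟩ := hcyc.inC_and_psi_mem h hker (x := c) (by simp)
    · exact absurd hψc.symm hψψ_ne
    · -- Here `Ψ` runs around the cycle backwards, so `a`, `b`, `c` all start at one vertex.
      rw [hψc] at hsrc'
      have hab_src : Q.src a = Q.src b := hsrc.trans hbc'.symm
      have hac_src : Q.src a = Q.src c := hab'.trans hsrc'.symm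
      exact absurd ⟨hab_src, hab_src.symm.trans hac_src⟩
        (st.not_src_eq_and_src_eq ha hb hc hab hbc hac)
    · exact absurd hψc.symm hψ_ne

theorem bijOn_psi_is3Cycle (h : RelsComposable Q) (h₃ : ∀ O, COrbit Q st O → O.ncard = 3)
    (hker : LinearMap.ker (boundary Q) ≤ orbitSpan st) :
    Set.BijOn (fun a => (a, psi st h a, psi st h (psi st h a))) {a | InC Q st a}
      {t : ℕ × ℕ × ℕ | Is3Cycle Q t.1 t.2.1 t.2.2} := by
  refine ⟨fun a ha => is3Cycle_psi h h₃ ha, fun a _ b _ hab => congrArg Prod.fst hab, ?_⟩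
  rintro ⟨a, b, c⟩ hcyc
  obtain ⟨rfl, rfl⟩ : psi st h a = b ∧ psi st h b = c := Is3Cycle.psi_eq h h₃ hker hcyc
  exact ⟨a, (Is3Cycle.inC_and_psi_mem h hker hcyc (by simp)).1, rfl⟩

end ThreeCycles

section Invariant

variable {Q : QuivRel} {st : SigmaTau Q} {O : Set Thread} {m n p q : ℕ}

theorem NOrbit.subset_setOf_inN (hO : NOrbit Q st O) : O ⊆ {w | InN Q st w} := by
  obtain ⟨w, hw, rfl⟩ := hO
  exact fun w' hw' => (iff_of_eqvGen (fun _ _ h => iff_of_true h.1 h.2.1) hw').1 hw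

theorem NOrbit.pN_pos (h : RelsComposable Q) (he : EndpointsMem Q) (hO : NOrbit Q st O) :
    0 < pN O := by
  refine (Set.ncard_pos ((finite_setOf_inN st h he).subset hO.subset_setOf_inN)).2 ?_
  obtain ⟨w, -, rfl⟩ := hO
  exact ⟨w, .refl w⟩

theorem finite_setOf_nOrbit (st : SigmaTau Q) (h : RelsComposable Q) (he : EndpointsMem Q) :
    {O | NOrbit Q st O}.Finite :=
  (finite_setOf_inN st h he).finite_subsets.subset fun _ hO => hO.subset_setOf_inN

theorem fInv_zero_left (h : RelsComposable Q) (he : EndpointsMem Q) (q : ℕ) :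
    fInv Q st (0, q) = {O | COrbit Q st O ∧ O.ncard = q}.ncard := by
  have hempty : {O | NOrbit Q st O ∧ pN O = 0 ∧ qN O = q} = ∅ :=
    Set.eq_empty_iff_forall_notMem.2 fun O hO => (hO.1.pN_pos h he).ne' hO.2.1
  simp only [fInv, hempty, Set.ncard_empty, zero_add, true_and]

theorem fInv_of_pos (hp : 0 < p) (q : ℕ) :
    fInv Q st (p, q) = {O | NOrbit Q st O ∧ pN O = p ∧ qN O = q}.ncard := by
  simp only [fInv, hp.ne', false_and, and_false, Set.ofPred_false, Set.ncard_empty, add_zero]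

theorem COrbit.fInv_pos {O : Set ℕ} (h : RelsComposable Q) (he : EndpointsMem Q)
    (hO : COrbit Q st O) : 0 < fInv Q st (0, O.ncard) := by
  rw [fInv_zero_left h he]
  exact (Set.ncard_pos ((finite_setOf_cOrbit st).subset fun _ hO => hO.1)).2 ⟨O, hO, rfl⟩

theorem NOrbit.fInv_pos (h : RelsComposable Q) (he : EndpointsMem Q) (hO : NOrbit Q st O) :
    0 < fInv Q st (pN O, qN O) := by
  rw [fInv_of_pos (hO.pN_pos h he)]
  exact (Set.ncard_pos ((finite_setOf_nOrbit st h he).subset fun _ hO => hO.1)).2 ⟨O, hO, rfl, rfl⟩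

theorem ncard_of_cOrbit (h : RelsComposable Q) (he : EndpointsMem Q) (hp : 0 < p)
    (hf : ∀ x, fInv Q st x = m * charFn 0 n x + charFn p q x) {O : Set ℕ} (hO : COrbit Q st O) :
    O.ncard = n := by
  by_contra hne
  have hpos := hO.fInv_pos h he
  simp [hf, charFn, hne, hp.ne] at hpos

theorem ncard_setOf_cOrbit (h : RelsComposable Q) (he : EndpointsMem Q) (hp : 0 < p)
    (hf : ∀ x, fInv Q st x = m * charFn 0 n x + charFn p q x) :
    {O | COrbit Q st O}.ncard = m := by
  have hn : {O | COrbit Q st O} = {O | COrbit Q st O ∧ O.ncard = n} :=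
    Set.ext fun O => (and_iff_left_of_imp (ncard_of_cOrbit h he hp hf)).symm
  rw [hn, ← fInv_zero_left h he, hf]
  simp [charFn, hp.ne]

theorem pN_eq_and_qN_eq_of_nOrbit (h : RelsComposable Q) (he : EndpointsMem Q)
    (hf : ∀ x, fInv Q st x = m * charFn 0 n x + charFn p q x) (hO : NOrbit Q st O) :
    pN O = p ∧ qN O = q := by
  by_contra hne
  have hpos := hO.fInv_pos h he
  simp [hf, charFn, hne, (hO.pN_pos h he).ne'] at hpos

theorem nOrbit_setOf_inN (h : RelsComposable Q) (he : EndpointsMem Q) (hp : 0 < p)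
    (hf : ∀ x, fInv Q st x = m * charFn 0 n x + charFn p q x) :
    NOrbit Q st {w | InN Q st w} := by
  have hone : {O | NOrbit Q st O ∧ pN O = p ∧ qN O = q}.ncard = 1 := by
    rw [← fInv_of_pos hp, hf]
    simp [charFn, hp.ne']
  obtain ⟨O, hO⟩ := Set.ncard_eq_one.1 hone
  have hmem : NOrbit Q st O := (hO.symm.subset rfl : O ∈ {O | NOrbit Q st O ∧ _}).1
  have hunique (O') (hO' : NOrbit Q st O') : O' = O :=
    hO.subset ⟨hO', pN_eq_and_qN_eq_of_nOrbit h he hf hO'⟩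
  have hsubset : {w | InN Q st w} ⊆ O := fun w hw => hunique _ ⟨w, hw, rfl⟩ ▸ .refl w
  exact hmem.subset_setOf_inN.antisymm hsubset ▸ hmem

end Invariant

/-- Let `𝚫 ∈ 𝒜` and let `m` be the number of `3`-cycles in
`Δ` counted up to cyclic permutation (each cyclic class consists of exactly
three ordered `3`-cycles).  Then
`f_𝚫 = m·[0,3] + [|Δ₀| + 1 - m, |Δ₀| - 1 - 2m]` (in particular
`2m + 1 ≤ |Δ₀|`, so the natural subtractions are honest). -/
theorem stmt18 (Q : QuivRel) (st : SigmaTau Q) (hA : ClassA Q st)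
    (m : ℕ)
    (hm : m = {t : ℕ × ℕ × ℕ | Is3Cycle Q t.1 t.2.1 t.2.2}.ncard / 3) :
    2 * m + 1 ≤ Q.V.card ∧
    ∀ x, fInv Q st x =
      m * charFn 0 3 x +
        charFn (Q.V.card + 1 - m) (Q.V.card - 1 - 2 * m) x := by
  obtain ⟨⟨-, he, hconn, h, -⟩, m₀, p, hf⟩ := hA
  have h : RelsComposable Q := h
  have hp : 0 < p + m₀ + 2 := by omega
  have hO₃ (O) (hO : COrbit Q st O) : O.ncard = 3 := ncard_of_cOrbit h he hp hf hO
  have hO : {O | COrbit Q st O}.ncard = m₀ := ncard_setOf_cOrbit h he hp hf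
  obtain ⟨hpN, hqN⟩ := pN_eq_and_qN_eq_of_nOrbit h he hf (nOrbit_setOf_inN h he hp hf)
  have hC : {a | InC Q st a}.ncard = m₀ * 3 := hO ▸ ncard_setOf_inC_eq_mul hO₃
  have hA : p + m₀ * 3 = Q.A.card := by rw [← hqN, ← hC, qN_setOf_inN_add_ncard st h he]
  have hV : p + m₀ + 2 + Q.A.card = 2 * Q.V.card := hpN ▸ ncard_setOf_inN_add_card st h he
  have hker := orbitSpan_eq_ker_boundary (st := st) h hconn (by omega)
  rw [← (bijOn_psi_is3Cycle h hO₃ hker.ge).ncard_eq, hC, Nat.mul_div_cancel _ three_pos] at hm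
  subst hm
  refine ⟨by omega, fun x => ?_⟩
  rw [hf x, show Q.V.card + 1 - m = p + m + 2 by omega, show Q.V.card - 1 - 2 * m = p by omega]

end GentleQuiv
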